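/- Let k ≥ 3 and n ≥ 6k − 10 be integers. Then the Turán number of the even wheel W_{2k} satisfies ex(n, W_{2k}) = ⌊n²/3⌋. -/

import Mathlib

/-!
The lower bound `n ^ 2 / 3` is attained by the balanced complete tripartite graph: the rim of
`W_{2k}` is an odd cycle, which cannot lie in the bipartite graph formed by the two colour classes
not containing the hub (`EvenWheel.turanGraph_not_contains`).

For the upper bound, write `t = k - 1`; a wheel `W_{2k}` is a cycle on `2 t + 1` vertices inside the
neighbourhood of a vertex. Let `G` have more than `n ^ 2 / 3` edges and maximum degree `Δ`. Then
`3 Δ > 2 n`, and counting edges shows that the neighbourhood of a vertex of degree `Δ` spans more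
than `Δ ^ 2 / 4` edges (`EvenWheel.dense_nb`). A graph on `m` vertices with more than `m ^ 2 / 4`
edges contains cycles of all lengths from `3` up to its circumference `c`
(`EvenWheel.hasCyc_of_dense`):

* by the Erdős–Gallai bound `c (m - 1) / 2` for the number of edges
  (`EvenWheel.vol_le_of_no_long_cycle`), a longest cycle covers at least half of the vertices;
* the vertices outside it can then be deleted one by one, each having degree at most half of the
  current order. Indeed, if all of them had larger degree, the two ends of a longest path outside
  the cycle would be attached to the cycle so often that the cycle could be made longer
  (`EvenWheel.CycFun.dense_of_longest`);
* so the longest cycle itself spans more than `c ^ 2 / 4` edges, and Bondy's argument on pairs of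
  chords from consecutive vertices gives all shorter lengths (`EvenWheel.CycFun.pancyclic`).

The Erdős–Gallai bound forces `c ≥ 2 t + 1` as soon as `Δ ≥ 4 t - 1`
(`EvenWheel.hasCyc_odd_of_dense`). For `n ≥ 6 t - 4` this only leaves out the case `n = 6 t - 4`,
`Δ = 4 t - 2`. There the degrees fall short of `Δ` by at most `4 t - 4` in total, and Chvátal's
degree condition (`EvenWheel.exists_low_degrees`) shows that the neighbourhood of a suitable vertex
of maximum degree is Hamiltonian (`EvenWheel.exists_hamiltonian_nb`), so again `c ≥ 2 t + 1`.
-/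

open SimpleGraph

/-- `G` contains `H` as a (not necessarily induced) subgraph. -/
def Contains {α β : Type*} (G : SimpleGraph α) (H : SimpleGraph β) : Prop :=
  ∃ f : H →g G, Function.Injective f

/-- The join `G₁ ⊗ G₂` of two graphs: disjoint union plus all cross edges. -/
def graphJoin {α β : Type*} (G : SimpleGraph α) (H : SimpleGraph β) :
    SimpleGraph (α ⊕ β) :=
  SimpleGraph.fromRel (fun u v =>
    match u, v with
    | Sum.inl a, Sum.inl b => G.Adj a b
    | Sum.inr a, Sum.inr b => H.Adj a b
    | Sum.inl _, Sum.inr _ => True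
    | Sum.inr _, Sum.inl _ => True)

/-- The wheel `W_q` on `q` vertices: a hub joined to all vertices of a cycle `C_{q-1}`. -/
def wheelGraph (q : ℕ) : SimpleGraph (Unit ⊕ Fin (q - 1)) :=
  graphJoin (⊥ : SimpleGraph Unit) (cycleGraph (q - 1))

/-- The star `S_{k+1}` with `k` leaves: a hub joined to `k` independent vertices. -/
def starGraph (k : ℕ) : SimpleGraph (Unit ⊕ Fin k) :=
  graphJoin (⊥ : SimpleGraph Unit) (⊥ : SimpleGraph (Fin k))

/-- `m` pairwise vertex-disjoint copies of `H`. -/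
def disjointCopies (m : ℕ) {V : Type*} (H : SimpleGraph V) : SimpleGraph (Fin m × V) :=
  SimpleGraph.fromRel (fun u v => u.1 = v.1 ∧ H.Adj u.2 v.2)

/-- The disjoint union of the family of graphs `G i`. -/
def disjointSigma {ι : Type*} {V : ι → Type*} (G : ∀ i, SimpleGraph (V i)) :
    SimpleGraph (Σ i, V i) :=
  SimpleGraph.fromRel (fun u v => ∃ h : u.1 = v.1, (G v.1).Adj (h ▸ u.2) v.2)

/-- The Turán number `ex(n, H)`: the maximum number of edges of an `H`-free graph
on `n` vertices. -/
noncomputable def exNum {β : Type*} (n : ℕ) (H : SimpleGraph β) : ℕ :=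
  sSup {e | ∃ G : SimpleGraph (Fin n), ¬ Contains G H ∧ Nat.card G.edgeSet = e}

namespace EvenWheel

open Finset

variable {V : Type*} [DecidableEq V]

/-! ### Degrees inside a vertex set -/

open Classical in
/-- The neighbours of `x` in the vertex set `S`; the vertex `x` need not lie in `S`. -/
noncomputable def nb (G : SimpleGraph V) (S : Finset V) (x : V) : Finset V :=
  S.filter (fun y => G.Adj x y)

/-- The number of neighbours of `x` in the vertex set `S`. -/
noncomputable def dg (G : SimpleGraph V) (S : Finset V) (x : V) : ℕ := (nb G S x).card

/-- The degree sum of the subgraph induced on `S`, that is, twice its number of edges. -/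
noncomputable def vol (G : SimpleGraph V) (S : Finset V) : ℕ := ∑ x ∈ S, dg G S x

variable {G : SimpleGraph V} {S T : Finset V} {x y : V}

omit [DecidableEq V] in
lemma mem_nb : y ∈ nb G S x ↔ y ∈ S ∧ G.Adj x y := by simp [nb]

lemma dg_union (h : Disjoint S T) (x : V) : dg G (S ∪ T) x = dg G S x + dg G T x := by
  classical
  unfold dg nb
  rw [filter_union, card_union_of_disjoint (disjoint_filter_filter h)]

omit [DecidableEq V] in
lemma dg_mono (h : S ⊆ T) (x : V) : dg G S x ≤ dg G T x := by
  classical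
  exact card_le_card (filter_subset_filter _ h)

omit [DecidableEq V] in
lemma dg_le_card (x : V) : dg G S x ≤ S.card := by
  classical
  exact card_filter_le _ _

omit [DecidableEq V] in
lemma sum_dg_comm (S T : Finset V) : ∑ x ∈ S, dg G T x = ∑ x ∈ T, dg G S x := by
  classical
  have := Finset.sum_card_bipartiteAbove_eq_sum_card_bipartiteBelow (s := S) (t := T) G.Adj
  simpa [dg, nb, bipartiteAbove, bipartiteBelow, G.adj_comm] using this

lemma vol_union (h : Disjoint S T) :
    vol G (S ∪ T) = vol G S + ∑ x ∈ T, dg G (S ∪ T) x + ∑ x ∈ T, dg G S x := by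
  unfold vol
  rw [sum_union h, ← sum_dg_comm S T, sum_congr rfl (fun x _ => dg_union (G := G) h x),
    sum_add_distrib]
  ring

lemma vol_erase {w : V} (hw : w ∈ S) : vol G S = vol G (S.erase w) + 2 * dg G S w := by
  have hd : Disjoint (S.erase w) {w} := by simp
  have hu : S.erase w ∪ {w} = S := by
    ext a; by_cases h : a = w <;> simp [h, hw]
  have h1 := vol_union (G := G) hd
  have h2 := dg_union (G := G) hd w
  have h3 : dg G {w} w = 0 := by simp [dg, nb]
  rw [hu] at h1 h2
  simp only [sum_singleton] at h1
  omega

lemma even_vol (G : SimpleGraph V) (S : Finset V) : Even (vol G S) := by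
  induction S using Finset.induction_on with
  | empty => simp [vol]
  | insert a s ha ih =>
    rw [vol_erase (mem_insert_self a s), erase_insert ha]
    exact ih.add (even_two_mul _)

/-! ### Paths and cycles as lists -/

/-- `l` lists the vertices of a walk in `G` from `a` to `b`, in order. -/
def IsP (G : SimpleGraph V) (a b : V) (l : List V) : Prop :=
  l.IsChain G.Adj ∧ l.head? = some a ∧ l.getLast? = some b

/-- The subgraph of `G` induced on `S` contains a cycle with `c` vertices. This is meant for
`3 ≤ c` only. -/
def HasCyc (G : SimpleGraph V) (S : Finset V) (c : ℕ) : Prop :=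
  ∃ l a b, IsP G a b l ∧ G.Adj b a ∧ l.Nodup ∧ l.length = c ∧ ∀ x ∈ l, x ∈ S

/-- A cycle of `G` with `c` vertices, parametrised by the natural numbers modulo `c`. -/
structure CycFun (G : SimpleGraph V) (c : ℕ) (p : ℕ → V) : Prop where
  pos : 0 < c
  per : ∀ i, p (i + c) = p i
  adj : ∀ i, G.Adj (p i) (p (i + 1))
  inj : ∀ i j, p i = p j → i % c = j % c

/-- The vertices `p a, p (a + 1), …, p (a + n - 1)`. -/
def seg (p : ℕ → V) (a n : ℕ) : List V := (List.range' a n).map p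

omit [DecidableEq V] in
lemma IsP.append {a b c d : V} {l l' : List V} (h : IsP G a b l) (h' : IsP G c d l')
    (hbc : G.Adj b c) : IsP G a d (l ++ l') := by
  obtain ⟨h1, h2, h3⟩ := h
  obtain ⟨k1, k2, k3⟩ := h'
  refine ⟨h1.append k1 ?_, ?_, ?_⟩
  · intro x hx y hy
    rw [h3] at hx; rw [k2] at hy
    simp only [Option.mem_def, Option.some.injEq] at hx hy
    subst hx hy; exact hbc
  · simp [List.head?_append, h2]
  · simp [List.getLast?_append, k3]

omit [DecidableEq V] in
lemma IsP.reverse {a b : V} {l : List V} (h : IsP G a b l) : IsP G b a l.reverse := by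
  obtain ⟨h1, h2, h3⟩ := h
  refine ⟨?_, by simpa using h3, by simpa using h2⟩
  rw [List.isChain_reverse]
  exact h1.imp (fun _ _ h => h.symm)

omit [DecidableEq V] in
lemma isP_singleton (a : V) : IsP G a a [a] := ⟨List.isChain_singleton a, rfl, rfl⟩

omit [DecidableEq V] in
lemma isP_seg {p : ℕ → V} {a n : ℕ} (hn : 0 < n)
    (h : ∀ i, a ≤ i → i + 1 < a + n → G.Adj (p i) (p (i + 1))) :
    IsP G (p a) (p (a + n - 1)) (seg p a n) := by
  induction n generalizing a with
  | zero => omega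
  | succ n ih =>
    rcases Nat.eq_zero_or_pos n with rfl | hpos
    · simpa [seg] using isP_singleton (G := G) (p a)
    · have := (isP_singleton (G := G) (p a)).append
        (ih (a := a + 1) hpos (fun i hi hi' => h i (by omega) (by omega)))
        (h a le_rfl (by omega))
      rw [show a + 1 + n - 1 = a + (n + 1) - 1 by omega] at this
      simpa [seg, List.range'_succ] using this

omit [DecidableEq V] in
@[simp] lemma length_seg (p : ℕ → V) (a n : ℕ) : (seg p a n).length = n := by simp [seg]

omit [DecidableEq V] in
lemma CycFun.shift {c : ℕ} {p : ℕ → V} (h : CycFun G c p) (s : ℕ) :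
    CycFun G c (fun i => p (i + s)) where
  pos := h.pos
  per i := by rw [show i + c + s = i + s + c by ring]; exact h.per _
  adj i := by rw [show i + 1 + s = i + s + 1 by ring]; exact h.adj _
  inj i j hij := Nat.ModEq.add_right_cancel' s (h.inj _ _ hij)

omit [DecidableEq V] in
lemma CycFun.mod {c : ℕ} {p : ℕ → V} (h : CycFun G c p) (i : ℕ) : p (i % c) = p i := by
  have : ∀ k, p (i % c + c * k) = p (i % c) := by
    intro k
    induction k with
    | zero => simp
    | succ k ih => rw [Nat.mul_succ, ← add_assoc, h.per, ih]
  rw [← this (i / c), Nat.mod_add_div]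

omit [DecidableEq V] in
lemma CycFun.injOn {c : ℕ} {p : ℕ → V} (h : CycFun G c p) {i j : ℕ} (hi : i < c) (hj : j < c)
    (hij : p i = p j) : i = j := by
  have := h.inj i j hij
  rwa [Nat.mod_eq_of_lt hi, Nat.mod_eq_of_lt hj] at this

/-- The vertex set of a parametrised cycle. -/
def cset (p : ℕ → V) (c : ℕ) : Finset V := (range c).image p

lemma CycFun.card_cset {c : ℕ} {p : ℕ → V} (h : CycFun G c p) : (cset p c).card = c := by
  rw [cset, card_image_of_injOn, card_range]
  intro i hi j hj hij
  exact h.injOn (by simpa using hi) (by simpa using hj) hij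

lemma CycFun.mem_cset {c : ℕ} {p : ℕ → V} (h : CycFun G c p) (i : ℕ) : p i ∈ cset p c := by
  rw [← h.mod i]
  exact mem_image_of_mem _ (mem_range.2 (Nat.mod_lt _ h.pos))

lemma CycFun.cset_shift {c : ℕ} {p : ℕ → V} (h : CycFun G c p) (s : ℕ) :
    cset (fun i => p (i + s)) c = cset p c := by
  refine eq_of_subset_of_card_le ?_ ?_
  · intro x hx
    obtain ⟨i, -, rfl⟩ := mem_image.1 hx
    exact h.mem_cset _
  · rw [h.card_cset, (h.shift s).card_cset]

lemma CycFun.sum_cset {c : ℕ} {p : ℕ → V} (h : CycFun G c p) (f : V → ℕ) :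
    ∑ x ∈ cset p c, f x = ∑ i ∈ range c, f (p i) := by
  rw [cset, sum_image]
  intro i hi j hj hij
  exact h.injOn (by simpa using hi) (by simpa using hj) hij

omit [DecidableEq V] in
lemma HasCyc.mono {c : ℕ} (h : HasCyc G S c) (hST : S ⊆ T) : HasCyc G T c := by
  obtain ⟨l, a, b, h1, h2, h3, h4, h5⟩ := h
  exact ⟨l, a, b, h1, h2, h3, h4, fun x hx => hST (h5 x hx)⟩

lemma HasCyc.le_card {c : ℕ} (h : HasCyc G S c) : c ≤ S.card := by
  obtain ⟨l, a, b, -, -, h3, rfl, h5⟩ := h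
  rw [← List.toFinset_card_of_nodup h3]
  exact card_le_card (fun x hx => h5 x (by simpa using hx))

lemma HasCyc.exists_cycFun {c : ℕ} (h : HasCyc G S c) :
    ∃ p, CycFun G c p ∧ cset p c ⊆ S := by
  obtain ⟨l, a, b, ⟨h1, ha, hb⟩, h2, h3, rfl, h5⟩ := h
  have hpos : 0 < l.length := by
    rcases l with _ | ⟨_, _⟩
    · simp at ha
    · simp
  have hlt : ∀ i, i % l.length < l.length := fun i => Nat.mod_lt _ hpos
  refine ⟨fun i => l[i % l.length]'(hlt i), ⟨hpos, ?_, ?_, ?_⟩, ?_⟩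
  · intro i; simp
  · intro i
    rcases Nat.lt_or_ge (i % l.length + 1) l.length with hi | hi
    · have e : (i + 1) % l.length = i % l.length + 1 := by
        rw [← Nat.mod_add_mod, Nat.mod_eq_of_lt hi]
      simp only [e]
      exact (List.isChain_iff_getElem.1 h1) _ hi
    · have e0 : i % l.length = l.length - 1 := by have := hlt i; omega
      have e : (i + 1) % l.length = 0 := by
        rw [← Nat.mod_add_mod, e0, Nat.sub_add_cancel hpos, Nat.mod_self]
      simp only [e, e0]
      have ea : l[0] = a := by
        rw [List.head?_eq_getElem?, List.getElem?_eq_getElem hpos] at ha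
        simpa using ha
      have eb : l[l.length - 1] = b := by
        rw [List.getLast?_eq_getElem?, List.getElem?_eq_getElem (by omega)] at hb
        simpa using hb
      rw [ea, eb]; exact h2
  · intro i j hij
    exact (h3.getElem_inj_iff).1 hij
  · intro x hx
    obtain ⟨i, -, rfl⟩ := mem_image.1 hx
    exact h5 _ (List.getElem_mem _)

omit [DecidableEq V] in
lemma CycFun.nodup_map {c : ℕ} {p : ℕ → V} (h : CycFun G c p) {l : List ℕ} (hl : l.Nodup)
    (hlt : ∀ i ∈ l, i < c) : (l.map p).Nodup :=
  List.Nodup.map_on (fun _ hx _ hy hxy => h.injOn (hlt _ hx) (hlt _ hy) hxy) hl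

lemma CycFun.hasCyc {c : ℕ} {p : ℕ → V} (h : CycFun G c p) : HasCyc G (cset p c) c := by
  refine ⟨seg p 0 c, p 0, p (0 + c - 1), isP_seg h.pos (fun i _ _ => h.adj i), ?_, ?_, by simp, ?_⟩
  · have := h.adj (c - 1)
    rw [Nat.sub_add_cancel h.pos] at this
    have h0 := h.per 0
    rw [zero_add] at h0
    rw [h0] at this
    simpa using this
  · exact h.nodup_map List.nodup_range' (fun i hi => by simp at hi; omega)
  · intro x hx
    obtain ⟨i, -, rfl⟩ := List.mem_map.1 hx
    exact h.mem_cset i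

/-! ### Dense Hamiltonian graphs are pancyclic -/

/-- The degree in a cycle is counted by positions along the cycle. -/
lemma CycFun.dg_le {c : ℕ} {p : ℕ → V} (x : V) (K : Finset ℕ)
    (hK : ∀ i < c, G.Adj x (p i) → i ∈ K) : dg G (cset p c) x ≤ K.card := by
  refine le_trans (card_le_card ?_) (card_image_le (s := K) (f := p))
  intro y hy
  rw [mem_nb] at hy
  obtain ⟨i, hi, rfl⟩ := mem_image.1 hy.1
  exact mem_image_of_mem _ (hK i (mem_range.1 hi) hy.2)

/-- Chords at two consecutive vertices of a cycle on `m` vertices pair up in such a way that a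
pair of chords both present produces a cycle on `l` vertices. -/
lemma CycFun.dg_add_dg_le {m l : ℕ} {p : ℕ → V} (h : CycFun G m p) (hl : 3 ≤ l) (hlm : l ≤ m)
    (hno : ¬ HasCyc G (cset p m) l) : dg G (cset p m) (p 0) + dg G (cset p m) (p 1) ≤ m := by
  classical
  set K := (Ico 2 m).filter (fun i => G.Adj (p 0) (p i)) with hKd
  set K' := (Ico 2 m).filter (fun i => G.Adj (p 1) (p i)) with hKd'
  have h0 : dg G (cset p m) (p 0) ≤ K.card + 1 := by
    refine (CycFun.dg_le (p 0) (insert 1 K) ?_).trans (card_insert_le _ _)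
    intro i hi hadj
    rcases i with _ | _ | i
    · exact absurd hadj (G.loopless.irrefl _)
    · simp
    · simp [K, hadj, hi]
  have h1 : dg G (cset p m) (p 1) ≤ K'.card + 1 := by
    refine (CycFun.dg_le (p 1) (insert 0 K') ?_).trans (card_insert_le _ _)
    intro i hi hadj
    rcases i with _ | _ | i
    · simp
    · exact absurd hadj (G.loopless.irrefl _)
    · simp [K', hadj, hi]
  -- The partner of the chord from `p 0` to `p k` is the chord from `p 1` to `p (f k)`.
  set f : ℕ → ℕ := fun k => if l - 1 ≤ k then k + 3 - l else k + m + 1 - l with hf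
  have hmap : ∀ k ∈ K, f k ∈ Ico 2 m \ K' := by
    intro k hk
    simp only [K, mem_filter, mem_Ico] at hk
    obtain ⟨⟨hk2, hkm⟩, hadj⟩ := hk
    have hfk : f k ∈ Ico 2 m := by
      simp only [hf, mem_Ico]; split_ifs <;> omega
    refine mem_sdiff.2 ⟨hfk, fun hK' => hno ?_⟩
    have hadj' : G.Adj (p 1) (p (f k)) := (mem_filter.1 hK').2
    have hmem : ∀ L : List ℕ, ∀ x ∈ L.map p, x ∈ cset p m := by
      intro L x hx
      obtain ⟨i, -, rfl⟩ := List.mem_map.1 hx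
      exact h.mem_cset i
    by_cases hc : l - 1 ≤ k
    · have hfe : f k = k + 3 - l := if_pos hc
      rw [hfe] at hadj'
      have P := ((isP_singleton (G := G) (p 0)).append (isP_singleton (p 1)) (h.adj 0)).append
        (isP_seg (G := G) (p := p) (a := k + 3 - l) (n := l - 2) (by omega)
          (fun i _ _ => h.adj i)) hadj'
      rw [show k + 3 - l + (l - 2) - 1 = k by omega] at P
      refine ⟨_, _, _, P, hadj.symm, ?_, by simp; omega, ?_⟩
      · have := h.nodup_map (l := [0] ++ [1] ++ List.range' (k + 3 - l) (l - 2)) (by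
          simp [List.nodup_range']; omega) (by intro i hi; simp at hi; omega)
        simpa [seg] using this
      · have := hmem ([0] ++ [1] ++ List.range' (k + 3 - l) (l - 2))
        simpa [seg] using this
    · have hfe : f k = k + m + 1 - l := if_neg hc
      rw [hfe] at hadj'
      have Q := (isP_seg (G := G) (p := p) (a := 1) (n := k) (by omega)
          (fun i _ _ => h.adj i)).reverse
      rw [show 1 + k - 1 = k by omega] at Q
      have P := ((isP_singleton (G := G) (p 0)).append Q hadj).append
        (isP_seg (G := G) (p := p) (a := k + m + 1 - l) (n := l - 1 - k) (by omega)
          (fun i _ _ => h.adj i)) hadj'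
      rw [show k + m + 1 - l + (l - 1 - k) - 1 = m - 1 by omega] at P
      refine ⟨_, _, _, P, ?_, ?_, by simp; omega, ?_⟩
      · have h1 := h.adj (m - 1)
        have h2 := h.per 0
        rw [Nat.sub_add_cancel h.pos] at h1
        rw [zero_add] at h2
        rwa [h2] at h1
      · have := h.nodup_map
          (l := [0] ++ (List.range' 1 k).reverse ++ List.range' (k + m + 1 - l) (l - 1 - k)) (by
          simp [List.nodup_range', List.nodup_append]
          exact ⟨by omega, fun a _ _ b _ _ => by omega⟩) (by intro i hi; simp at hi; omega)
        simpa [seg] using this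
      · have := hmem ([0] ++ (List.range' 1 k).reverse ++
          List.range' (k + m + 1 - l) (l - 1 - k))
        simpa [seg] using this
  have hinj : Set.InjOn f (K : Set ℕ) := by
    intro a ha b hb hab
    simp only [K, mem_coe, mem_filter, mem_Ico] at ha hb
    simp only [hf] at hab
    split_ifs at hab <;> omega
  have hcard := card_le_card_of_injOn f (s := K) (t := Ico 2 m \ K') hmap hinj
  have hKs : K' ⊆ Ico 2 m := filter_subset _ _
  rw [card_sdiff_of_subset hKs, Nat.card_Ico] at hcard
  have := card_le_card hKs
  rw [Nat.card_Ico] at this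
  omega

/-- A graph on `m` vertices with a Hamiltonian cycle and more than `m ^ 2 / 4` edges contains
cycles of all lengths. -/
lemma CycFun.pancyclic {m l : ℕ} {p : ℕ → V} (h : CycFun G m p) (hl : 3 ≤ l) (hlm : l ≤ m)
    (hvol : m ^ 2 < 2 * vol G (cset p m)) : HasCyc G (cset p m) l := by
  by_contra hno
  have key : ∀ j, dg G (cset p m) (p j) + dg G (cset p m) (p (j + 1)) ≤ m := by
    intro j
    have := (h.shift j).dg_add_dg_le hl hlm (by rwa [h.cset_shift])
    rw [h.cset_shift] at this
    simpa [add_comm] using this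
  have e1 : vol G (cset p m) = ∑ j ∈ range m, dg G (cset p m) (p j) := h.sum_cset _
  have e2 : vol G (cset p m) = ∑ j ∈ range m, dg G (cset p m) (p (j + 1)) := by
    have := (h.shift 1).sum_cset (dg G (cset p m))
    rwa [h.cset_shift] at this
  have : 2 * vol G (cset p m) ≤ ∑ j ∈ range m, m := by
    rw [two_mul]
    nth_rewrite 1 [e1]
    rw [e2, ← sum_add_distrib]
    exact sum_le_sum (fun j _ => key j)
  simp only [sum_const, card_range, smul_eq_mul] at this
  nlinarith

/-! ### Vertices outside a longest cycle -/

/-- A longest path of `G` inside a nonempty set `R`. -/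
lemma exists_longest_path (G : SimpleGraph V) {R : Finset V} (hR : R.Nonempty) :
    ∃ l a b, IsP G a b l ∧ l.Nodup ∧ (∀ x ∈ l, x ∈ R) ∧
      ∀ l' a' b', IsP G a' b' l' → l'.Nodup → (∀ x ∈ l', x ∈ R) → l'.length ≤ l.length := by
  classical
  set Q : ℕ → Prop := fun n => ∃ l a b, IsP G a b l ∧ l.Nodup ∧ (∀ x ∈ l, x ∈ R) ∧ l.length = n
  have hb : ∀ n, Q n → n ≤ R.card := by
    rintro n ⟨l, a, b, -, h2, h3, rfl⟩
    rw [← List.toFinset_card_of_nodup h2]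
    exact card_le_card (fun x hx => h3 x (by simpa using hx))
  obtain ⟨x, hx⟩ := hR
  have h1 : Q 1 := ⟨[x], x, x, isP_singleton x, by simp, by simpa using hx, rfl⟩
  obtain ⟨l, a, b, k1, k2, k3, k4⟩ := Nat.findGreatest_spec (P := Q) (hb 1 h1) h1
  refine ⟨l, a, b, k1, k2, k3, fun l' a' b' j1 j2 j3 => ?_⟩
  rw [k4]
  have hQ : Q l'.length := ⟨l', a', b', j1, j2, j3, rfl⟩
  exact Nat.le_findGreatest (hb _ hQ) hQ

/-- All neighbours of the first vertex of a longest path lie on the path. -/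
lemma dg_lt_of_longest {R : Finset V} {l : List V} {a b : V} (h : IsP G a b l) (hn : l.Nodup)
    (hR : ∀ x ∈ l, x ∈ R)
    (hmax : ∀ l' a' b', IsP G a' b' l' → l'.Nodup → (∀ x ∈ l', x ∈ R) → l'.length ≤ l.length) :
    dg G R a < l.length := by
  have ha : a ∈ l := List.mem_of_mem_head? h.2.1
  have hsub : nb G R a ⊆ l.toFinset.erase a := by
    intro y hy
    rw [mem_nb] at hy
    refine mem_erase.2 ⟨hy.2.ne', ?_⟩
    by_contra hyl
    have hyl' : y ∉ l := by simpa using hyl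
    have := hmax _ _ _ ((isP_singleton y).append h hy.2.symm) (by simp [hyl', hn])
      (by simpa using ⟨hy.1, hR⟩)
    simp at this
  have := card_le_card hsub
  rw [card_erase_of_mem (by simpa using ha), List.toFinset_card_of_nodup hn] at this
  have hpos : 0 < l.length := List.length_pos_of_mem ha
  unfold dg
  omega

/-- If a path on `t` vertices avoids a longest cycle on `c` vertices, then the attachments of its
two ends on the cycle are few: between an attachment of one end and an attachment of the other
there are at least `t` vertices of the cycle. -/
lemma CycFun.attach {c : ℕ} {p : ℕ → V} (h : CycFun G c p) {R : Finset V}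
    (hd : Disjoint (cset p c) R) (hmax : ∀ c', c < c' → ¬ HasCyc G (cset p c ∪ R) c')
    {W : List V} {a b : V} (hW : IsP G a b W) (hn : W.Nodup) (hWR : ∀ x ∈ W, x ∈ R)
    (ha : 0 < dg G (cset p c) a) (hb : 0 < dg G (cset p c) b) :
    dg G (cset p c) a + dg G (cset p c) b + W.length ≤ c + 1 := by
  classical
  obtain ⟨y, hy⟩ := card_pos.1 ha
  rw [mem_nb] at hy
  obtain ⟨s, hs, rfl⟩ := mem_image.1 hy.1
  -- Number the cycle so that position `0` is an attachment of `a`.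
  wlog hs0 : s = 0 generalizing p s
  · have := this (h.shift s) (by rwa [h.cset_shift]) (by rwa [h.cset_shift])
      (by rwa [h.cset_shift]) (by rwa [h.cset_shift]) 0 (by simpa using h.pos)
      (by rw [h.cset_shift]; simpa using hy) rfl
    rwa [h.cset_shift] at this
  subst hs0
  have hWd : ∀ x ∈ W, ∀ i, p i ≠ x := fun x hx i hi =>
    (Finset.disjoint_left.1 hd (h.mem_cset i)) (hi ▸ hWR x hx)
  have hcyc : ∀ L : List ℕ, ∀ x ∈ W.reverse ++ L.map p, x ∈ cset p c ∪ R := by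
    intro L x hx
    rcases List.mem_append.1 hx with hx | hx
    · exact mem_union_right _ (hWR x (by simpa using hx))
    · obtain ⟨i, -, rfl⟩ := List.mem_map.1 hx
      exact mem_union_left _ (h.mem_cset i)
  have hnd : ∀ L : List ℕ, L.Nodup → (∀ i ∈ L, i < c) → (W.reverse ++ L.map p).Nodup := by
    intro L hL hLc
    refine List.nodup_append.2 ⟨by simpa using hn, h.nodup_map hL hLc, ?_⟩
    intro x hx z hz
    obtain ⟨i, -, rfl⟩ := List.mem_map.1 hz
    exact fun e => hWd x (by simpa using hx) i e.symm
  set A := (range c).filter (fun i => G.Adj a (p i)) with hA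
  set B := (range c).filter (fun i => G.Adj b (p i)) with hB
  have hdA : dg G (cset p c) a ≤ A.card :=
    CycFun.dg_le a A (fun i hi hadj => by simp [A, hi, hadj])
  have hdB : dg G (cset p c) b ≤ B.card :=
    CycFun.dg_le b B (fun i hi hadj => by simp [B, hi, hadj])
  have hWpos : 0 < W.length := List.length_pos_of_mem (List.mem_of_mem_head? hW.2.1)
  have hlast : G.Adj (p (c - 1)) (p 0) := by
    have h1 := h.adj (c - 1)
    have h2 := h.per 0
    rw [Nat.sub_add_cancel h.pos] at h1
    rw [zero_add] at h2
    rwa [h2] at h1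
  have gap0 : ∀ i ∈ B, i + W.length < c := by
    intro i hi
    simp only [B, mem_filter, mem_range] at hi
    by_contra hlt
    have P := hW.reverse.append (isP_seg (G := G) (p := p) (a := 0) (n := i + 1) (by omega)
      (fun i _ _ => h.adj i)) hy.2
    refine hmax (W.length + (i + 1)) (by omega) ⟨_, _, _, P, ?_, ?_, by simp, ?_⟩
    · simpa using hi.2.symm
    · exact hnd _ List.nodup_range' (by simp; omega)
    · exact hcyc _
  have gap : ∀ i ∈ B, ∀ j, 1 ≤ j → j ≤ W.length → i + j ∉ A := by
    intro i hi j hj1 hj2 hA'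
    have hc := gap0 i hi
    simp only [A, B, mem_filter, mem_range] at hi hA'
    have P := (hW.reverse.append (isP_seg (G := G) (p := p) (a := i + j) (n := c - (i + j))
      (by omega) (fun i _ _ => h.adj i)) hA'.2).append (isP_seg (G := G) (p := p) (a := 0)
      (n := i + 1) (by omega) (fun i _ _ => h.adj i))
      (by rw [show i + j + (c - (i + j)) - 1 = c - 1 by omega]; exact hlast)
    refine hmax (W.length + (c - (i + j)) + (i + 1)) (by omega)
      ⟨_, _, _, P, ?_, ?_, by simp; omega, ?_⟩
    · simpa using hi.2.symm
    · have := hnd (List.range' (i + j) (c - (i + j)) ++ List.range' 0 (i + 1))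
        (by simp [List.nodup_range', List.nodup_append]; intro x _ _ y _; omega)
        (by simp; omega)
      simpa [seg] using this
    · have := hcyc (List.range' (i + j) (c - (i + j)) ++ List.range' 0 (i + 1))
      simpa [seg] using this
  have hBne : B.Nonempty := card_pos.1 (by omega)
  set m := B.max' hBne with hm
  have hmB : m ∈ B := B.max'_mem hBne
  have hmc := gap0 m hmB
  -- The positions `i + 1` with `i ∈ B`, together with the `t - 1` positions after the last of
  -- them, are not attachments of `a`.
  set U := B.image (· + 1) ∪ Ico (m + 2) (m + W.length + 1) with hU
  have hUc : U.card = B.card + (W.length - 1) := by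
    rw [hU, card_union_of_disjoint, card_image_of_injective _ (add_left_injective 1),
      Nat.card_Ico]
    · omega
    · rw [Finset.disjoint_left]
      intro x hx hx'
      obtain ⟨i, hi, rfl⟩ := mem_image.1 hx
      have := B.le_max' i hi
      simp only [mem_Ico] at hx'
      omega
  have hUA : Disjoint A U := by
    rw [Finset.disjoint_right]
    intro x hx
    rcases mem_union.1 hx with hx | hx
    · obtain ⟨i, hi, rfl⟩ := mem_image.1 hx
      exact gap i hi 1 le_rfl hWpos
    · simp only [mem_Ico] at hx
      have := gap m hmB (x - m) (by omega) (by omega)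
      rwa [show m + (x - m) = x by omega] at this
  have hsub : A ∪ U ⊆ range c := by
    refine union_subset (filter_subset _ _) (union_subset ?_ ?_)
    · intro x hx
      obtain ⟨i, hi, rfl⟩ := mem_image.1 hx
      have := gap0 i hi
      simp only [mem_range]; omega
    · intro x hx
      simp only [mem_Ico] at hx
      simp only [mem_range]; omega
  have := card_le_card hsub
  rw [card_union_of_disjoint hUA, hUc, card_range] at this
  omega

/-- Among the at most `c` vertices outside a longest cycle on `c` vertices, some vertex is adjacent
to at most half of all vertices. -/
lemma CycFun.exists_low {c : ℕ} {p : ℕ → V} (h : CycFun G c p) {R : Finset V}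
    (hd : Disjoint (cset p c) R) (hmax : ∀ c', c < c' → ¬ HasCyc G (cset p c ∪ R) c')
    (hne : R.Nonempty) (hRc : R.card ≤ c) :
    ∃ w ∈ R, 2 * dg G (cset p c ∪ R) w ≤ c + R.card := by
  by_contra! hcon
  obtain ⟨W, a, b, hW, hn, hWR, hlong⟩ := exists_longest_path G hne
  have haR : a ∈ R := hWR a (List.mem_of_mem_head? hW.2.1)
  have hbR : b ∈ R := hWR b (List.mem_of_mem_getLast? hW.2.2)
  have ha := hcon a haR
  have hb := hcon b hbR
  rw [dg_union hd] at ha hb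
  have ha' := dg_lt_of_longest hW hn hWR hlong
  have hb' := dg_lt_of_longest hW.reverse (by simpa using hn) (by simpa using hWR)
    (by simpa using hlong)
  simp only [List.length_reverse] at hb'
  have hWc : W.length ≤ R.card := by
    rw [← List.toFinset_card_of_nodup hn]
    exact card_le_card (fun x hx => hWR x (by simpa using hx))
  have := h.attach hd hmax hW hn hWR (by omega) (by omega)
  omega

/-- If `C` is a longest cycle covering at least half of the vertices and the graph has more than
a quarter of the square of its order as edges, then so has the subgraph induced on `C`: delete
the outside vertices one at a time, always one of degree at most half the current order. -/
lemma CycFun.dense_of_longest {c : ℕ} {p : ℕ → V} (h : CycFun G c p) (r : ℕ) {R : Finset V}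
    (hr : R.card = r)
    (hd : Disjoint (cset p c) R) (hmax : ∀ c', c < c' → ¬ HasCyc G (cset p c ∪ R) c')
    (hRc : R.card ≤ c) (hvol : (c + R.card) ^ 2 < 2 * vol G (cset p c ∪ R)) :
    c ^ 2 < 2 * vol G (cset p c) := by
  induction r generalizing R with
  | zero =>
    obtain rfl := card_eq_zero.1 hr
    simpa using hvol
  | succ r ih =>
    obtain ⟨w, hw, hlow⟩ := h.exists_low hd hmax (card_pos.1 (by omega)) hRc
    have hwC : w ∉ cset p c := fun hh => (Finset.disjoint_left.1 hd hh) hw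
    have hsplit : (cset p c ∪ R).erase w = cset p c ∪ R.erase w := by
      rw [erase_union_distrib, erase_eq_of_notMem hwC]
    have hR' : (R.erase w).card = r := by rw [card_erase_of_mem hw]; omega
    have hsub : cset p c ∪ R.erase w ⊆ cset p c ∪ R :=
      union_subset_union_right (erase_subset _ _)
    refine ih hR' (hd.mono_right (erase_subset _ _))
      (fun c' hc' hh => hmax c' hc' (hh.mono hsub)) (by omega) ?_
    have e := vol_erase (G := G) (mem_union_right (cset p c) hw)
    rw [hsplit] at e
    obtain ⟨v, hv⟩ := even_vol G (cset p c ∪ R.erase w)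
    rw [hr] at hvol hlow
    rw [hR']
    rw [e] at hvol
    generalize dg G (cset p c ∪ R) w = d at *
    rw [hv] at hvol ⊢
    -- Parity matters here: twice the degree sum is a multiple of four.
    obtain ⟨q, hq | hq⟩ : ∃ q, c + (r + 1) = 2 * q ∨ c + (r + 1) = 2 * q + 1 := by
      refine ⟨(c + (r + 1)) / 2, ?_⟩; omega
    · rw [hq] at hvol hlow
      have hq1 : 1 ≤ q := by omega
      obtain ⟨s, rfl⟩ : ∃ s, q = s + 1 := ⟨q - 1, by omega⟩
      rw [show c + r = 2 * s + 1 by omega]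
      have : s * s + s < v := by nlinarith
      nlinarith
    · rw [hq] at hvol hlow
      rw [show c + r = 2 * q by omega]
      have : d ≤ q := by omega
      nlinarith

/-! ### The Erdős–Gallai bound for graphs without long cycles -/

lemma exists_max {α : Type*} {P : α → Prop} (f : α → ℕ) (B : ℕ) (hb : ∀ a, P a → f a ≤ B)
    (hne : ∃ a, P a) : ∃ a, P a ∧ ∀ b, P b → f b ≤ f a := by
  classical
  set Q : ℕ → Prop := fun n => ∃ a, P a ∧ f a = n
  obtain ⟨a, ha⟩ := hne
  obtain ⟨m, hm, hm'⟩ :=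
    Nat.findGreatest_spec (P := Q) (n := B) (hb a ha) (⟨a, ha, rfl⟩ : Q (f a))
  exact ⟨m, hm, fun b hb' => by
    rw [hm']; exact Nat.le_findGreatest (hb b hb') ⟨b, hb', rfl⟩⟩

/-- A path `Q ++ z :: T` inside `S` whose first vertex is adjacent to `z`, where `Q` is not
empty. -/
def IsLasso (G : SimpleGraph V) (S : Finset V) (Q : List V) (z : V) (T : List V) : Prop :=
  (Q ++ z :: T).IsChain G.Adj ∧ (Q ++ z :: T).Nodup ∧ (∀ x ∈ Q ++ z :: T, x ∈ S) ∧
    ∃ a, Q.head? = some a ∧ G.Adj a z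

omit [DecidableEq V] in
lemma IsLasso.hasCyc {S : Finset V} {Q T : List V} {z : V} (h : IsLasso G S Q z T) :
    HasCyc G S (Q.length + 1) := by
  obtain ⟨h1, h2, h3, a, ha, haz⟩ := h
  rw [show Q ++ z :: T = (Q ++ [z]) ++ T by simp] at h1 h2 h3
  exact ⟨Q ++ [z], a, z, ⟨h1.left_of_append, by simp [ha], by simp⟩, haz.symm,
    (List.nodup_append.1 h2).1, by simp, fun x hx => h3 x (List.mem_append_left _ hx)⟩

/-- The inductive step of the Erdős–Gallai bound: a set `L` of vertices whose removal destroys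
few edges. It consists of the vertices that can be rotated to the front of a longest path within
the cyclic part of a lasso. -/
lemma exists_sparse_part {S : Finset V} {c : ℕ} (hc : ∀ c', c < c' → ¬ HasCyc G S c')
    (hadj : ∃ x ∈ S, ∃ y ∈ S, G.Adj x y) :
    ∃ L Z : Finset V, L ⊆ Z ∧ Z ⊆ S ∧ L.Nonempty ∧ L ≠ Z ∧ Z.card ≤ c ∧
      ∀ x ∈ L, nb G S x ⊆ Z ∧ dg G S x ≤ L.card := by
  classical
  have hlen : ∀ l : List V, l.Nodup → (∀ x ∈ l, x ∈ S) → l.length ≤ S.card := by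
    intro l hl hS
    rw [← List.toFinset_card_of_nodup hl]
    exact card_le_card (fun x hx => hS x (by simpa using hx))
  -- Among the lassos on a longest path choose one with the largest cyclic part.
  obtain ⟨⟨Q₀, z, T⟩, h₀, hmax⟩ := exists_max (P := fun q : List V × V × List V =>
      IsLasso G S q.1 q.2.1 q.2.2)
    (fun q => (q.1 ++ q.2.1 :: q.2.2).length * (S.card + 1) + q.1.length)
    (S.card * (S.card + 1) + S.card) (by
      rintro ⟨Q, z, T⟩ h
      have h1 := hlen _ h.2.1 h.2.2.1
      have h2 : Q.length ≤ S.card := by simp at h1; omega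
      exact Nat.add_le_add (Nat.mul_le_mul_right _ h1) h2) (by
      obtain ⟨x, hx, y, hy, hxy⟩ := hadj
      exact ⟨([x], y, []), by simpa using hxy, by simpa using hxy.ne, by simp [hx, hy], x, rfl,
        hxy⟩)
  have hmax' : ∀ Q z' T', IsLasso G S Q z' T' →
      (Q ++ z' :: T').length ≤ (Q₀ ++ z :: T).length ∧
      ((Q ++ z' :: T').length = (Q₀ ++ z :: T).length → Q.length ≤ Q₀.length) := by
    intro Q z' T' h
    have h1 := hmax (Q, z', T') h
    have h2 := hlen _ h₀.2.1 h₀.2.2.1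
    dsimp only at h1 h2
    have h3 : Q₀.length ≤ S.card := by simp at h2; omega
    constructor
    · by_contra hlt
      nlinarith
    · intro e
      rw [e] at h1
      omega
  set L := Q₀.toFinset.filter (fun x => ∃ Q : List V, Q.Perm Q₀ ∧ Q.head? = some x ∧
    (Q ++ z :: T).IsChain G.Adj) with hL
  have hzQ : z ∉ Q₀ := by
    have := h₀.2.1
    rw [List.nodup_append] at this
    exact fun hz => this.2.2 z hz z (by simp) rfl
  have hQnd : Q₀.Nodup := (List.nodup_append.1 h₀.2.1).1
  have hLQ : L ⊆ Q₀.toFinset := filter_subset _ _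
  refine ⟨L, insert z Q₀.toFinset, hLQ.trans (subset_insert _ _), ?_, ?_, ?_, ?_, ?_⟩
  · intro x hx
    refine h₀.2.2.1 x ?_
    simp only [mem_insert, List.mem_toFinset] at hx
    rcases hx with rfl | hx <;> simp [*]
  · obtain ⟨a, ha, -⟩ := h₀.2.2.2
    exact ⟨a, mem_filter.2 ⟨by simpa using List.mem_of_mem_head? ha, Q₀, List.Perm.refl _, ha,
      h₀.1⟩⟩
  · intro e
    have : z ∈ L := by rw [e]; simp
    exact hzQ (by simpa using hLQ this)
  · rw [card_insert_of_notMem (by simpa using hzQ), List.toFinset_card_of_nodup hQnd]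
    by_contra hlt
    exact hc _ (by simpa using hlt) h₀.hasCyc
  · intro x hx
    obtain ⟨hxQ, Q, hperm, hhead, hch⟩ := mem_filter.1 hx
    obtain ⟨Q₁, rfl⟩ : ∃ Q₁, Q = x :: Q₁ := by
      rcases Q with _ | ⟨y, Q₁⟩
      · simp at hhead
      · simp only [List.head?_cons, Option.some.injEq] at hhead
        exact ⟨Q₁, by rw [hhead]⟩
    have hperm' : ((x :: Q₁) ++ z :: T).Perm (Q₀ ++ z :: T) := hperm.append_right _
    have hnd : ((x :: Q₁) ++ z :: T).Nodup := hperm'.nodup_iff.2 h₀.2.1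
    have hS : ∀ y ∈ (x :: Q₁) ++ z :: T, y ∈ S := fun y hy => h₀.2.2.1 y (hperm'.mem_iff.1 hy)
    have hlenQ := hperm.length_eq
    have hsub : nb G S x ⊆ insert z Q₀.toFinset := by
      intro y hy
      rw [mem_nb] at hy
      have hyP : y ∈ (x :: Q₁) ++ z :: T := by
        by_contra hyP
        have := (hmax' [y] x (Q₁ ++ z :: T) ⟨by simpa using ⟨hy.2.symm, by simpa using hch⟩,
          by simpa using ⟨by simpa using hyP, by simpa using hnd⟩,
          by simpa using ⟨hy.1, by simpa using hS⟩, y, rfl, hy.2.symm⟩).1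
        have e := hperm'.length_eq
        simp at this e
        omega
      rcases List.mem_append.1 hyP with h | h
      · simp [(hperm.mem_iff.1 h)]
      rcases List.mem_cons.1 h with rfl | h
      · simp
      · exfalso
        obtain ⟨T₁, T₂, rfl⟩ := List.append_of_mem h
        have e : (x :: Q₁) ++ z :: (T₁ ++ y :: T₂) = ((x :: Q₁) ++ z :: T₁) ++ y :: T₂ := by simp
        have := (hmax' ((x :: Q₁) ++ z :: T₁) y T₂ ⟨e ▸ hch, e ▸ hnd, e ▸ hS, x, rfl, hy.2⟩).2
          (by rw [← e]; exact hperm'.length_eq)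
        simp at this hlenQ
        omega
    refine ⟨hsub, ?_⟩
    -- A neighbour of `x` is the successor on the path of a vertex of `L`.
    set P := (x :: Q₁) ++ z :: T with hP
    refine le_trans (card_le_card (t := L.image (fun u => P.getD (P.idxOf u + 1) z)) ?_)
      card_image_le
    intro y hy
    have hyZ := hsub hy
    rw [mem_nb] at hy
    have hyP : y ∈ Q₁ ++ [z] := by
      simp only [mem_insert, List.mem_toFinset] at hyZ
      rcases hyZ with rfl | h
      · simp
      · have := hperm.mem_iff.2 h
        rcases List.mem_cons.1 this with rfl | h
        · exact absurd hy.2 (G.loopless.irrefl _)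
        · simp [h]
    obtain ⟨i, hi, rfl⟩ := List.getElem_of_mem hyP
    have hi' : i < (x :: Q₁).length := by simpa using hi
    have hPl : i + 1 < P.length := by simp [hP]; simp at hi; omega
    have hPi : P[i + 1] = (Q₁ ++ [z])[i] := by
      simp only [hP, List.cons_append, List.getElem_cons_succ]
      rw [List.getElem_append, List.getElem_append]
      split_ifs with hh
      · rfl
      · simp at hi
        have : i - Q₁.length = 0 := by omega
        simp [this]
    refine mem_image.2 ⟨(x :: Q₁)[i], ?_, ?_⟩
    · refine mem_filter.2 ⟨by simpa using hperm.mem_iff.1 (List.getElem_mem hi'),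
        ((x :: Q₁).take (i + 1)).reverse ++ (x :: Q₁).drop (i + 1), ?_, ?_, ?_⟩
      · refine List.Perm.trans ?_ hperm
        refine ((List.reverse_perm _).append_right _).trans ?_
        rw [List.take_append_drop]
      · rw [List.head?_append, List.head?_reverse, List.getLast?_take]
        simp [List.getElem?_eq_getElem hi']
      · have hsplit : P = (x :: Q₁).take (i + 1) ++ ((x :: Q₁).drop (i + 1) ++ z :: T) := by
          rw [← List.append_assoc, List.take_append_drop]
        have hch' := hch
        rw [hsplit] at hch'
        rw [List.append_assoc]
        refine List.IsChain.append ?_ hch'.right_of_append ?_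
        · rw [List.isChain_reverse]
          exact hch'.left_of_append.imp (fun _ _ h => h.symm)
        · intro u hu w hw
          have hu' : u = x := by simpa using hu.symm
          have hw' : w = P[i + 1] := by
            have : ((x :: Q₁).drop (i + 1) ++ z :: T) = P.drop (i + 1) := by
              conv_rhs => rw [hsplit]
              rw [List.drop_left']
              simp at hi' ⊢; omega
            rw [this, List.head?_drop, List.getElem?_eq_getElem hPl] at hw
            simpa using hw.symm
          rw [hu', hw', hPi]
          exact hy.2
    · have e : (x :: Q₁)[i] = P[i] := by
        simp only [hP]
        rw [List.getElem_append_left hi']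
      rw [e, hnd.idxOf_getElem, List.getD_eq_getElem _ _ hPl, hPi]

/-- A nonempty graph of order `m` with no cycle on more than `c` vertices has at most
`c * (m - 1) / 2` edges. -/
lemma vol_le_of_no_long_cycle {c : ℕ} {S : Finset V} (hne : S.Nonempty)
    (hc : ∀ c', c < c' → ¬ HasCyc G S c') : vol G S ≤ c * (S.card - 1) := by
  induction hs : S.card using Nat.strong_induction_on generalizing S with
  | _ s ih =>
    subst hs
    by_cases hadj : ∃ x ∈ S, ∃ y ∈ S, G.Adj x y
    · obtain ⟨L, Z, hLZ, hZS, hL, hLne, hZc, hLd⟩ := exists_sparse_part hc hadj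
      have hLS := hLZ.trans hZS
      have hlt : L.card < Z.card := card_lt_card (hLZ.ssubset_of_ne hLne)
      have hZS' := card_le_card hZS
      have hLpos := hL.card_pos
      have hcard : (S \ L).card = S.card - L.card := card_sdiff_of_subset hLS
      have h1 := ih (S \ L).card (by omega) (card_pos.1 (by omega))
        (fun c' hc' hh => hc c' hc' (hh.mono sdiff_subset)) rfl
      have e := vol_union (G := G) (sdiff_disjoint : Disjoint (S \ L) L)
      rw [sdiff_union_of_subset hLS] at e
      have h2 : ∑ x ∈ L, dg G S x ≤ L.card * L.card := by
        simpa using sum_le_card_nsmul L (dg G S) L.card (fun x hx => (hLd x hx).2)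
      have h3 : ∑ x ∈ L, dg G (S \ L) x ≤ L.card * (Z.card - L.card) := by
        have := sum_le_card_nsmul L (dg G (S \ L)) (Z.card - L.card) (fun x hx => by
          rw [← card_sdiff_of_subset hLZ]
          refine card_le_card (fun y hy => ?_)
          rw [mem_nb, mem_sdiff] at hy
          exact mem_sdiff.2 ⟨(hLd x hx).1 (mem_nb.2 ⟨hy.1.1, hy.2⟩), hy.1.2⟩)
        simpa using this
      rw [e]
      rw [hcard] at h1
      obtain ⟨d, hd⟩ := Nat.exists_eq_add_of_lt hlt
      obtain ⟨f, hf⟩ := Nat.exists_eq_add_of_le hZS'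
      rw [show Z.card - L.card = d + 1 by omega] at h3
      rw [show S.card - L.card - 1 = d + f by omega] at h1
      rw [show S.card - 1 = L.card + d + f by omega]
      have : L.card * (L.card + d + 1) ≤ L.card * c := Nat.mul_le_mul_left _ (by omega)
      nlinarith
    · have : vol G S = 0 := by
        refine sum_eq_zero (fun x hx => card_eq_zero.2 (eq_empty_of_forall_notMem ?_))
        intro y hy
        rw [mem_nb] at hy
        exact hadj ⟨x, hx, y, hy.1, hy.2⟩
      omega

/-! ### Dense graphs contain all cycles up to their circumference -/

/-- If a graph on `m` vertices has more than `m ^ 2 / 4` edges, then it contains cycles of all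
lengths from `3` to the length of a longest cycle. -/
lemma hasCyc_of_dense {S : Finset V} {c l : ℕ} (hvol : S.card ^ 2 < 2 * vol G S) (hl : 3 ≤ l)
    (hlc : l ≤ c) (hcyc : HasCyc G S c) : HasCyc G S l := by
  obtain ⟨c, ⟨hlc, hcyc⟩, hmax⟩ := exists_max (P := fun c => l ≤ c ∧ HasCyc G S c) id S.card
    (fun c hc => hc.2.le_card) ⟨c, hlc, hcyc⟩
  have hmax' : ∀ c', c < c' → ¬ HasCyc G S c' := fun c' hc' hh => by
    have := hmax c' ⟨by omega, hh⟩
    simp at this; omega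
  have hcS := hcyc.le_card
  have hEG := vol_le_of_no_long_cycle (card_pos.1 (by omega)) hmax'
  obtain ⟨p, hp, hpS⟩ := hcyc.exists_cycFun
  have hpc := hp.card_cset
  have hRc : (S \ cset p c).card = S.card - c := by rw [card_sdiff_of_subset hpS, hpc]
  have hu : cset p c ∪ S \ cset p c = S := union_sdiff_of_subset hpS
  have hle : S.card - c ≤ c := by
    by_contra hlt
    obtain ⟨m, hm⟩ : ∃ m, S.card = m + 1 := ⟨S.card - 1, by omega⟩
    rw [hm] at hEG hvol
    rw [Nat.add_sub_cancel] at hEG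
    have : 2 * c ≤ m := by omega
    nlinarith
  refine (hp.pancyclic hl hlc ?_).mono hpS
  refine hp.dense_of_longest _ rfl disjoint_sdiff (by rwa [hu]) (by omega) ?_
  rw [hu, hRc, Nat.add_sub_cancel' hcS]
  exact hvol

/-- A graph on `m ≥ 4 t - 1` vertices with more than `m ^ 2 / 4` edges contains a cycle on
`2 t + 1` vertices. -/
lemma hasCyc_odd_of_dense {S : Finset V} {t : ℕ} (ht : 1 ≤ t) (hS : 4 * t - 1 ≤ S.card)
    (hvol : S.card ^ 2 < 2 * vol G S) : HasCyc G S (2 * t + 1) := by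
  by_contra hno
  have hEG := vol_le_of_no_long_cycle (G := G) (c := 2 * t) (card_pos.1 (by omega))
    (fun c' hc' hh => hno (hasCyc_of_dense hvol (by omega) hc' hh))
  obtain ⟨m, hm⟩ : ∃ m, S.card = m + 1 := ⟨S.card - 1, by omega⟩
  rw [hm] at hEG hvol hS
  rw [Nat.add_sub_cancel] at hEG
  obtain ⟨d, hd⟩ : ∃ d, m + 2 = 4 * t + d := ⟨m + 2 - 4 * t, by omega⟩
  have h1 : (m + 1) ^ 2 < 4 * t * m := by nlinarith
  have h2 : 4 * t * m ≤ (m + 2) * m := Nat.mul_le_mul_right _ (by omega)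
  nlinarith

/-! ### Degrees in non-Hamiltonian graphs -/

/-- The end degrees of a Hamiltonian path in a graph on `M` vertices without Hamiltonian cycle add
up to less than `M`. -/
lemma dg_add_dg_lt_of_path {M : ℕ} {q : ℕ → V} (hM : 2 ≤ M)
    (hadj : ∀ i, i + 1 < M → G.Adj (q i) (q (i + 1)))
    (hinj : ∀ i < M, ∀ j < M, q i = q j → i = j) (hno : ¬ HasCyc G (cset q M) M) :
    dg G (cset q M) (q 0) + dg G (cset q M) (q (M - 1)) < M := by
  classical
  set A := (range (M - 1)).filter (fun i => G.Adj (q 0) (q (i + 1))) with hA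
  set B := (range (M - 1)).filter (fun i => G.Adj (q (M - 1)) (q i)) with hB
  have hdA : dg G (cset q M) (q 0) ≤ A.card := by
    refine (CycFun.dg_le (q 0) (A.image (· + 1)) ?_).trans card_image_le
    intro i hi h
    rcases i with _ | i
    · exact absurd h (G.loopless.irrefl _)
    · exact mem_image.2 ⟨i, by simp [A, h]; omega, rfl⟩
  have hdB : dg G (cset q M) (q (M - 1)) ≤ B.card := by
    refine CycFun.dg_le (q (M - 1)) B ?_
    intro i hi h
    rcases Nat.lt_or_ge i (M - 1) with hlt | hge
    · simp [B, h, hlt]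
    · obtain rfl : i = M - 1 := by omega
      exact absurd h (G.loopless.irrefl _)
  have hdisj : Disjoint A B := by
    rw [Finset.disjoint_left]
    intro i hiA hiB
    simp only [A, B, mem_filter, mem_range] at hiA hiB
    have P1 := isP_seg (G := G) (p := q) (a := 0) (n := i + 1) (by omega)
      (fun k _ _ => hadj k (by omega))
    have P2 := (isP_seg (G := G) (p := q) (a := i + 1) (n := M - 1 - i) (by omega)
      (fun k _ _ => hadj k (by omega))).reverse
    rw [show i + 1 + (M - 1 - i) - 1 = M - 1 by omega] at P2
    have P := P1.append P2 (by simpa using hiB.2.symm)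
    refine hno ⟨_, _, _, P, hiA.2.symm, ?_, by simp; omega, ?_⟩
    · have : (List.map q (List.range' 0 (i + 1) ++
          (List.range' (i + 1) (M - 1 - i)).reverse)).Nodup := by
        refine List.Nodup.map_on ?_ ?_
        · intro x hx y hy
          simp at hx hy
          exact hinj x (by omega) y (by omega)
        · simp [List.nodup_range', List.nodup_append]
          intro x _ y _ _
          omega
      simpa [seg] using this
    · intro x hx
      have : x ∈ List.map q (List.range' 0 (i + 1) ++
          (List.range' (i + 1) (M - 1 - i)).reverse) := by simpa [seg] using hx
      obtain ⟨k, hk, rfl⟩ := List.mem_map.1 this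
      simp at hk
      exact mem_image_of_mem _ (by simp; omega)
  have hsub : A ∪ B ⊆ range (M - 1) := union_subset (filter_subset _ _) (filter_subset _ _)
  have := card_le_card hsub
  rw [card_union_of_disjoint hdisj, card_range] at this
  omega

/-- Ore's argument: if adding the edge `uv` to a graph creates a Hamiltonian cycle, then the
degrees of `u` and `v` have a sum smaller than the order. -/
lemma dg_add_dg_lt_of_edge {S : Finset V} {M : ℕ} {u v : V} (hM : 3 ≤ M) (hS : S.card = M)
    (hno : ¬ HasCyc G S M) (hcyc : HasCyc (G ⊔ SimpleGraph.edge u v) S M) :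
    dg G S u + dg G S v < M := by
  obtain ⟨p, hp, hpS⟩ := hcyc.exists_cycFun
  have hpS' : cset p M = S := eq_of_subset_of_card_le hpS (by rw [hp.card_cset, hS])
  have hcase : ∀ i, G.Adj (p i) (p (i + 1)) ∨ (p i = u ∧ p (i + 1) = v) ∨
      (p i = v ∧ p (i + 1) = u) := by
    intro i
    have := hp.adj i
    rw [SimpleGraph.sup_adj, SimpleGraph.edge_adj] at this
    tauto
  obtain ⟨s, hs⟩ : ∃ s, (p s = u ∧ p (s + 1) = v) ∨ (p s = v ∧ p (s + 1) = u) := by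
    by_contra! hcon
    refine hno ?_
    rw [← hpS']
    refine CycFun.hasCyc ⟨hp.pos, hp.per, fun i => ?_, hp.inj⟩
    have := hcon i
    have := hcase i
    tauto
  -- Start the cycle just after the new edge.
  have hq := hp.shift (s + 1)
  have hqS := hp.cset_shift (s + 1)
  set q : ℕ → V := fun i => p (i + (s + 1)) with hqd
  have h0 : q 0 = p (s + 1) := by simp [hqd]
  have h1 : q (M - 1) = p s := by
    rw [← hp.per s]; simp only [hqd]; congr 1; omega
  have hinj : ∀ i < M, ∀ j < M, q i = q j → i = j := fun i hi j hj h => hq.injOn hi hj h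
  have key := dg_add_dg_lt_of_path (G := G) (M := M) (q := q) (by omega) (fun i hi => by
    have hqc : G.Adj (q i) (q (i + 1)) ∨ (q i = u ∧ q (i + 1) = v) ∨
        (q i = v ∧ q (i + 1) = u) := by
      have := hcase (i + (s + 1))
      rwa [show i + (s + 1) + 1 = i + 1 + (s + 1) by ring] at this
    rw [← h0, ← h1] at hs
    by_contra hna
    have : (q i = q 0 ∧ q (i + 1) = q (M - 1)) ∨ (q i = q (M - 1) ∧ q (i + 1) = q 0) := by
      rcases hqc with h | h | h <;> rcases hs with h' | h' <;> grind
    rcases this with ⟨e1, e2⟩ | ⟨e1, e2⟩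
    · have := hinj _ (by omega) _ (by omega) e1
      have := hinj _ (by omega) _ (by omega) e2
      omega
    · have := hinj _ (by omega) _ (by omega) e2
      omega) hinj (by rwa [hqS, hpS'])
  rw [hqS, hpS', h0, h1] at key
  rcases hs with ⟨e1, e2⟩ | ⟨e1, e2⟩ <;> rw [e1, e2] at key <;> omega

/-- Chvátal's degree condition: a non-Hamiltonian graph of order `M` has many vertices of small
degree. Here `i` and `j` are the degrees of a nonadjacent pair with the largest degree sum in a
maximal non-Hamiltonian supergraph. -/
lemma exists_low_degrees {S : Finset V} {M : ℕ} (hM : 3 ≤ M) (hS : S.card = M)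
    (hno : ¬ HasCyc G S M) :
    ∃ i j, ∃ u ∈ S, i ≤ j ∧ i + j + 1 ≤ M ∧ dg G S u ≤ i ∧
      M ≤ (S.filter (fun x => dg G S x ≤ i)).card + j + 1 ∧
      M ≤ (S.filter (fun x => dg G S x ≤ j)).card + i := by
  classical
  obtain ⟨G', ⟨hGG', hno'⟩, hmax⟩ := exists_max
    (P := fun G' : SimpleGraph V => G ≤ G' ∧ ¬ HasCyc G' S M) (fun G' => vol G' S)
    (S.card * S.card) (fun G' _ => by
      simpa [vol] using sum_le_card_nsmul S (dg G' S) S.card (fun x _ => dg_le_card x)) ⟨G, le_rfl, hno⟩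
  have hdg : ∀ {G₁ G₂ : SimpleGraph V}, G₁ ≤ G₂ → ∀ x, dg G₁ S x ≤ dg G₂ S x := by
    intro G₁ G₂ h x
    refine card_le_card (fun y hy => ?_)
    rw [mem_nb] at hy ⊢
    exact ⟨hy.1, h hy.2⟩
  have hore : ∀ u ∈ S, ∀ v ∈ S, u ≠ v → ¬ G'.Adj u v → dg G' S u + dg G' S v < M := by
    intro u hu v hv huv hadj
    refine dg_add_dg_lt_of_edge hM hS hno' ?_
    by_contra hcon
    have := hmax _ ⟨hGG'.trans (le_sup_left (b := SimpleGraph.edge u v)), hcon⟩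
    refine absurd this (not_le.2 (sum_lt_sum (fun x _ => hdg le_sup_left x) ⟨u, hu, ?_⟩))
    refine card_lt_card ⟨fun y hy => ?_, fun hsub => ?_⟩
    · rw [mem_nb] at hy ⊢
      exact ⟨hy.1, Or.inl hy.2⟩
    · have hv' := hsub (mem_nb.2 ⟨hv, Or.inr (by rw [SimpleGraph.edge_adj]; tauto)⟩)
      exact hadj (mem_nb.1 hv').2
  have hne : ∃ q : V × V, q.1 ∈ S ∧ q.2 ∈ S ∧ q.1 ≠ q.2 ∧ ¬ G'.Adj q.1 q.2 := by
    by_contra! hcon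
    have hadj : ∀ u ∈ S, ∀ v ∈ S, u ≠ v → G'.Adj u v := fun u hu v hv huv =>
      hcon (u, v) hu hv huv
    have hnd : S.toList.Nodup := S.nodup_toList
    have hlen : S.toList.length = M := by simpa using hS
    have h0 : 0 < S.toList.length := by omega
    have hl : S.toList.length - 1 < S.toList.length := by omega
    refine hno' ⟨S.toList, S.toList[0], S.toList[S.toList.length - 1], ⟨?_, ?_, ?_⟩, ?_, hnd, hlen,
      by simp⟩
    · rw [List.isChain_iff_getElem]
      intro i hi
      refine hadj _ (mem_toList.1 (List.getElem_mem _)) _ (mem_toList.1 (List.getElem_mem _)) ?_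
      rw [Ne, hnd.getElem_inj_iff]; omega
    · rw [List.head?_eq_getElem?, List.getElem?_eq_getElem]
    · rw [List.getLast?_eq_getElem?, List.getElem?_eq_getElem]
    · refine hadj _ (mem_toList.1 (List.getElem_mem _)) _ (mem_toList.1 (List.getElem_mem _)) ?_
      rw [Ne, hnd.getElem_inj_iff]; omega
  -- Choose a nonadjacent pair with the largest degree sum.
  obtain ⟨⟨u, v⟩, ⟨hu, hv, huv, hnadj⟩, hsum⟩ := exists_max
    (fun q : V × V => dg G' S q.1 + dg G' S q.2) (S.card + S.card)
    (fun q _ => Nat.add_le_add (dg_le_card _) (dg_le_card _)) hne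
  dsimp only at hu hv huv hnadj hsum
  wlog hle : dg G' S u ≤ dg G' S v generalizing u v
  · exact this v u (fun q hq => (hsum q hq).trans (by omega)) hv hu huv.symm
      (fun h => hnadj h.symm) (by omega)
  have hlt := hore u hu v hv huv hnadj
  have hcount : ∀ (w : V) (T : Finset V), w ∈ S → (∀ x ∈ S, x ≠ w → ¬ G'.Adj w x → x ∈ T) →
      M ≤ ((S.erase w) ∩ T).card + 1 + dg G' S w := by
    intro w T hw hT
    have hsub : S ⊆ insert w ((S.erase w) ∩ T) ∪ nb G' S w := by
      intro x hx
      by_cases hxw : x = w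
      · simp [hxw]
      by_cases hxa : G'.Adj w x
      · simp [mem_nb, hx, hxa]
      · simp [hx, hxw, hT x hx hxw hxa]
    have h1 := (card_le_card hsub).trans (card_union_le _ _)
    have h2 := card_insert_le w ((S.erase w) ∩ T)
    rw [hS] at h1
    unfold dg
    omega
  refine ⟨dg G' S u, dg G' S v, u, hu, hle, by omega, hdg hGG' u, ?_, ?_⟩
  · have := hcount v (S.filter (fun x => dg G S x ≤ dg G' S u)) hv (fun x hx hxv hxa => by
      have h1 := hsum (x, v) ⟨hx, hv, hxv, fun h => hxa h.symm⟩
      have h2 := hdg hGG' x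
      dsimp only at h1
      exact mem_filter.2 ⟨hx, by omega⟩)
    have h3 := card_le_card (inter_subset_right (s₁ := S.erase v)
      (s₂ := S.filter (fun x => dg G S x ≤ dg G' S u)))
    omega
  · set T := S.filter (fun x => dg G S x ≤ dg G' S v) with hT
    have := hcount u T hu (fun x hx hxu hxa => by
      have h1 := hsum (u, x) ⟨hu, hx, hxu.symm, hxa⟩
      have h2 := hdg hGG' x
      dsimp only at h1
      exact mem_filter.2 ⟨hx, by omega⟩)
    have huT : u ∈ T := mem_filter.2 ⟨hu, (hdg hGG' u).trans hle⟩
    have h3 : (S.erase u) ∩ T ⊆ T.erase u := by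
      intro x hx
      simp only [mem_inter, mem_erase] at hx ⊢
      tauto
    have h4 := card_le_card h3
    have h5 := card_erase_add_one huT
    omega

/-! ### An odd cycle in a neighbourhood -/

/-- A graph on `2 N` vertices whose degrees fall short of `N + 1` by little in total is
Hamiltonian. The deficiencies `δ` are defined on a larger vertex set; by the last hypothesis a large
deficiency inside `H` is accompanied by one at least as large outside, which the bound on the total
hardly allows. -/
lemma hasCyc_of_deficiency [Fintype V] {N : ℕ} {H : Finset V} {δ : V → ℕ} (hN : 3 ≤ N)
    (hH : H.card = 2 * N) (hδ : ∑ x, δ x ≤ 2 * N - 2) (hdg : ∀ x ∈ H, N + 1 ≤ dg G H x + δ x)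
    (hbig : ∀ x ∈ H, N - 1 ≤ δ x → ∃ y ∉ H, δ x ≤ δ y) : HasCyc G H (2 * N) := by
  by_contra hno
  obtain ⟨i, j, u, hu, hij, hijM, hui, hFi, hFj⟩ := exists_low_degrees (by omega) hH hno
  set F₁ := H.filter (fun x => dg G H x ≤ i) with hF₁
  set F₂ := H.filter (fun x => dg G H x ≤ j) with hF₂
  have hF₁δ : ∀ x ∈ F₁, N + 1 - i ≤ δ x := fun x hx => by
    have h1 := mem_filter.1 hx
    have := hdg x h1.1
    omega
  have hsumF : ∀ F : Finset V, ∑ x ∈ F, δ x ≤ 2 * N - 2 := fun F =>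
    (sum_le_sum_of_subset (subset_univ F)).trans hδ
  have hsum₁ : F₁.card * (N + 1 - i) ≤ ∑ x ∈ F₁, δ x := by
    simpa using card_nsmul_le_sum F₁ δ (N + 1 - i) hF₁δ
  rcases Nat.lt_or_ge (N - 2) i with hi | hi
  · obtain rfl : i = N - 1 := by omega
    have hsub : F₁ ⊆ F₂ := fun x hx => by
      have h1 := mem_filter.1 hx
      exact mem_filter.2 ⟨h1.1, h1.2.trans hij⟩
    have h2 : (F₂ \ F₁).card * 1 ≤ ∑ x ∈ F₂ \ F₁, δ x := by
      refine card_nsmul_le_sum (F₂ \ F₁) δ 1 (fun x hx => ?_)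
      have h1 := mem_filter.1 (mem_sdiff.1 hx).1
      have := hdg x h1.1
      omega
    have h3 := sum_sdiff hsub (f := δ)
    have h4 := hsumF F₂
    have h5 := card_sdiff_add_card_eq_card hsub
    rw [show N + 1 - (N - 1) = 2 by omega] at hsum₁
    omega
  rcases Nat.lt_or_ge 2 i with hi2 | hi2
  · have h1 : i * (N + 1 - i) ≤ F₁.card * (N + 1 - i) := Nat.mul_le_mul_right _ (by omega)
    have h2 := hsumF F₁
    obtain ⟨a, rfl⟩ : ∃ a, i = a + 3 := ⟨i - 3, by omega⟩
    obtain ⟨b, rfl⟩ : ∃ b, N = a + b + 5 := ⟨N - 2 - (a + 3), by omega⟩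
    rw [show a + b + 5 + 1 - (a + 3) = b + 3 by omega] at h1 hsum₁
    have h3 : (a + 3) * (b + 3) ≤ 2 * (a + b + 5) - 2 := by omega
    have h4 : (a + 3) * (b + 3) ≤ 2 * a + 2 * b + 8 := by omega
    nlinarith
  · have huF : u ∈ F₁ := mem_filter.2 ⟨hu, hui⟩
    have huδ := hF₁δ u huF
    obtain ⟨y, hyH, hy⟩ := hbig u hu (by omega)
    have hyF : y ∉ F₁ := fun h => hyH (mem_filter.1 h).1
    have h1 := hsumF (insert y F₁)
    rw [sum_insert hyF] at h1
    have h2 : 1 ≤ F₁.card := card_pos.2 ⟨u, huF⟩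
    have h3 : i ≤ F₁.card := by omega
    interval_cases i
    · have : 1 * (N + 1 - 0) ≤ F₁.card * (N + 1 - 0) := Nat.mul_le_mul_right _ h2
      omega
    · have : 1 * (N + 1 - 1) ≤ F₁.card * (N + 1 - 1) := Nat.mul_le_mul_right _ h2
      omega
    · have : 2 * (N + 1 - 2) ≤ F₁.card * (N + 1 - 2) := Nat.mul_le_mul_right _ h3
      omega

/-- The neighbourhood of a vertex of maximum degree `D` spans more than `D ^ 2 / 4` edges, if the
graph has more than a third of the square of its order as edges. -/
lemma dense_nb [Fintype V] {D : ℕ} {v : V} (hv : dg G univ v = D) (hD : ∀ x, dg G univ x ≤ D)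
    (hvol : 2 * Fintype.card V ^ 2 + 2 ≤ 3 * vol G univ) :
    D ^ 2 < 2 * vol G (nb G univ v) := by
  set H := nb G univ v with hH
  have hHc : H.card = D := hv
  have hcard : (univ \ H).card = Fintype.card V - D := by
    rw [card_sdiff_of_subset (subset_univ _), hHc, card_univ]
  have hDn : D ≤ Fintype.card V := by rw [← hHc]; exact card_le_univ _
  have e := vol_union (G := G) (disjoint_sdiff : Disjoint H (univ \ H))
  rw [union_sdiff_of_subset (subset_univ _)] at e
  have h1 : ∑ x ∈ univ \ H, dg G univ x ≤ (Fintype.card V - D) * D := by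
    simpa [hcard] using sum_le_card_nsmul (univ \ H) (dg G univ) D (fun x _ => hD x)
  have h2 : ∑ x ∈ univ \ H, dg G H x ≤ (Fintype.card V - D) * D := by
    simpa [hcard] using sum_le_card_nsmul (univ \ H) (dg G H) D
      (fun x _ => (dg_mono (subset_univ _) x).trans (hD x))
  obtain ⟨f, hf⟩ := Nat.exists_eq_add_of_le hDn
  rw [hf] at hvol h1 h2
  rw [Nat.add_sub_cancel_left] at h1 h2
  zify at *
  nlinarith [sq_nonneg ((2 : ℤ) * f - D)]

/-- The extremal case `n = 6 t - 4`, `Δ = 4 t - 2`, written in terms of `N = 2 t - 1`: a vertex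
of maximum degree can be chosen so that its neighbourhood is Hamiltonian. -/
lemma exists_hamiltonian_nb [Fintype V] {N : ℕ} (hN : 3 ≤ N) (hn : Fintype.card V = 3 * N - 1)
    (hD : ∀ x, dg G univ x ≤ 2 * N) (hex : ∃ v, dg G univ v = 2 * N)
    (hvol : 2 * Fintype.card V ^ 2 + 2 ≤ 3 * vol G univ) :
    ∃ v, dg G univ v = 2 * N ∧ HasCyc G (nb G univ v) (2 * N) := by
  set δ : V → ℕ := fun x => 2 * N - dg G univ x with hδ
  have hδx : ∀ x, dg G univ x + δ x = 2 * N := fun x => by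
    have := hD x
    simp only [hδ]; omega
  have hδsum : ∑ x, δ x ≤ 2 * N - 2 := by
    have h1 : vol G univ + ∑ x, δ x = Fintype.card V * (2 * N) := by
      unfold vol
      rw [← sum_add_distrib, sum_congr rfl (fun x _ => hδx x)]
      simp
    obtain ⟨M, rfl⟩ : ∃ M, N = M + 1 := ⟨N - 1, by omega⟩
    rw [hn, show 3 * (M + 1) - 1 = 3 * M + 2 by omega] at h1 hvol
    have : 3 * ∑ x, δ x ≤ 6 * M + 2 := by nlinarith
    omega
  -- Any vertex of maximum degree that is not adjacent to a vertex of largest deficiency will do;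
  -- if all deficiencies are small, this condition is not needed.
  suffices h : ∃ v, dg G univ v = 2 * N ∧
      ∀ x ∈ nb G univ v, N - 1 ≤ δ x → ∃ y ∉ nb G univ v, δ x ≤ δ y by
    obtain ⟨v, hv, hbig⟩ := h
    have hH : (nb G univ v).card = 2 * N := hv
    refine ⟨v, hv, hasCyc_of_deficiency (δ := δ) hN hH hδsum (fun x _ => ?_) hbig⟩
    have h1 := dg_union (G := G) (disjoint_sdiff : Disjoint (nb G univ v) (univ \ nb G univ v)) x
    rw [union_sdiff_of_subset (subset_univ _)] at h1
    have h2 : dg G (univ \ nb G univ v) x ≤ _ := dg_le_card x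
    rw [card_sdiff_of_subset (subset_univ _), hH, card_univ, hn] at h2
    have h3 := hδx x
    omega
  obtain ⟨v₁, hv₁⟩ := hex
  obtain ⟨x₀, -, hx₀⟩ := exists_max_image univ δ ⟨v₁, mem_univ _⟩
  by_cases hlarge : N - 1 ≤ δ x₀
  · obtain ⟨v, hv, hne, hna⟩ : ∃ v, dg G univ v = 2 * N ∧ v ≠ x₀ ∧ ¬ G.Adj x₀ v := by
      by_contra! hcon
      set F := univ \ insert x₀ (nb G univ x₀) with hF
      have hx₀nb : x₀ ∉ nb G univ x₀ := fun h => G.loopless.irrefl _ (mem_nb.1 h).2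
      have hFc : F.card + (dg G univ x₀ + 1) = 3 * N - 1 := by
        rw [hF, card_sdiff_of_subset (subset_univ _), card_insert_of_notMem hx₀nb, card_univ, hn]
        have := card_le_univ (insert x₀ (nb G univ x₀))
        rw [card_insert_of_notMem hx₀nb, hn] at this
        unfold dg
        omega
      have hFδ : F.card * 1 ≤ ∑ x ∈ F, δ x := by
        refine card_nsmul_le_sum F δ 1 (fun x hx => ?_)
        simp only [F, mem_sdiff, mem_univ, true_and, mem_insert, mem_nb, not_or] at hx
        have h1 := hδx x
        by_contra hlt
        exact hx.2 (hcon x (by omega) hx.1)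
      have hx₀F : x₀ ∉ F := by simp [F]
      have h1 : ∑ x ∈ insert x₀ F, δ x ≤ ∑ x, δ x := sum_le_sum_of_subset (subset_univ _)
      rw [sum_insert hx₀F] at h1
      have h2 := hδx x₀
      omega
    exact ⟨v, hv, fun x _ _ => ⟨x₀, fun h => hna (mem_nb.1 h).2.symm, hx₀ x (mem_univ _)⟩⟩
  · exact ⟨v₁, hv₁, fun x _ h => absurd (h.trans (hx₀ x (mem_univ _))) hlarge⟩

/-- A graph of order `n ≥ 6 t - 4` with more than `n ^ 2 / 3` edges has a vertex whose
neighbourhood contains a cycle on `2 t + 1` vertices. -/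
lemma exists_cyc_nb [Fintype V] {t : ℕ} (ht : 2 ≤ t) (hn : 6 * t - 4 ≤ Fintype.card V)
    (hvol : 2 * Fintype.card V ^ 2 + 2 ≤ 3 * vol G univ) :
    ∃ v, HasCyc G (nb G univ v) (2 * t + 1) := by
  have hne : (univ : Finset V).Nonempty := by
    rw [← card_pos, card_univ]; omega
  obtain ⟨v, -, hv⟩ := exists_max_image univ (dg G univ) hne
  set D := dg G univ v with hD
  have hmax : ∀ x, dg G univ x ≤ D := fun x => hv x (mem_univ _)
  have hvolD : vol G univ ≤ Fintype.card V * D := by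
    simpa [vol] using sum_le_card_nsmul univ (dg G univ) D (fun x _ => hmax x)
  have h3D : 2 * Fintype.card V < 3 * D := by nlinarith
  rcases Nat.lt_or_ge D (4 * t - 1) with hlt | hge
  · have hDt : D = 2 * (2 * t - 1) := by omega
    rw [hDt] at hmax
    obtain ⟨w, hw, hcyc⟩ := exists_hamiltonian_nb (G := G) (N := 2 * t - 1) (by omega) (by omega)
      hmax ⟨v, by rw [← hD, hDt]⟩ hvol
    have hdense := dense_nb hw hmax hvol
    have hwc : (nb G univ w).card = 2 * (2 * t - 1) := hw
    exact ⟨w, hasCyc_of_dense (by rwa [hwc]) (by omega) (by omega) hcyc⟩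
  · have hdense := dense_nb hD.symm hmax hvol
    have hvc : (nb G univ v).card = D := rfl
    exact ⟨v, hasCyc_odd_of_dense (by omega) (by omega) (by rwa [hvc])⟩

/-! ### Wheels -/

lemma wheelGraph_hub_adj {q : ℕ} (i : Fin (q - 1)) :
    (wheelGraph q).Adj (Sum.inl ()) (Sum.inr i) := by
  simp [wheelGraph, graphJoin, SimpleGraph.fromRel_adj]

lemma wheelGraph_rim_adj {q : ℕ} (i j : Fin (q - 1)) :
    (wheelGraph q).Adj (Sum.inr i) (Sum.inr j) ↔ (cycleGraph (q - 1)).Adj i j := by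
  simp only [wheelGraph, graphJoin, SimpleGraph.fromRel_adj, ne_eq, Sum.inr.injEq]
  constructor
  · rintro ⟨-, h | h⟩
    · exact h
    · exact h.symm
  · exact fun h => ⟨h.ne, Or.inl h⟩

lemma contains_wheelGraph {V : Type*} [DecidableEq V] {G : SimpleGraph V} {S : Finset V} {q : ℕ}
    {v : V} (hv : ∀ x ∈ S, G.Adj v x) (h : HasCyc G S (q - 1)) : Contains G (wheelGraph q) := by
  obtain ⟨p, hp, hpS⟩ := h.exists_cycFun
  have hvp : ∀ i, G.Adj v (p i) := fun i => hv _ (hpS (hp.mem_cset i))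
  have hstep : ∀ a b : Fin (q - 1), (a - b).val = 1 → G.Adj (p b) (p a) := by
    intro a b hab
    rw [Fin.sub_def] at hab
    dsimp only at hab
    have hb := b.2
    have e : p a = p (b + 1) := by
      rw [← hp.per a, show (a : ℕ) + (q - 1) = b + (q - 1 - b + a) by omega,
        ← hp.mod (b + (q - 1 - b + a)), ← Nat.add_mod_mod, hab, hp.mod]
    rw [e]
    exact hp.adj b
  refine ⟨⟨Sum.elim (fun _ => v) (fun i => p i), ?_⟩, ?_⟩
  · rintro (⟨⟩ | i) (⟨⟩ | j) hadj
    · exact absurd rfl hadj.ne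
    · exact hvp j
    · exact (hvp i).symm
    · rw [wheelGraph_rim_adj, SimpleGraph.cycleGraph_adj'] at hadj
      rcases hadj with h | h
      · exact (hstep i j h).symm
      · exact hstep j i h
  · rintro (⟨⟩ | i) (⟨⟩ | j) hij
    · rfl
    · exact absurd hij (hvp j).ne
    · exact absurd hij (hvp i).ne'
    · exact congrArg Sum.inr (Fin.ext (hp.injOn i.2 j.2 hij))

/-- A tripartite graph contains no wheel with an odd rim: the rim would be bipartite. -/
lemma turanGraph_not_contains {n q : ℕ} (hq : 2 ≤ q - 1) (hodd : Odd (q - 1)) :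
    ¬ Contains (turanGraph n 3) (wheelGraph q) := by
  rintro ⟨f, -⟩
  set h : ℕ := (f (Sum.inl ()) : ℕ) % 3 with hh
  have hhub : ∀ i : Fin (q - 1), h ≠ (f (Sum.inr i) : ℕ) % 3 := fun i =>
    turanGraph_adj.1 (f.map_rel (wheelGraph_hub_adj i))
  have hrim : ∀ i j : Fin (q - 1), (cycleGraph (q - 1)).Adj i j →
      (f (Sum.inr i) : ℕ) % 3 ≠ (f (Sum.inr j) : ℕ) % 3 := fun i j hij =>
    turanGraph_adj.1 (f.map_rel ((wheelGraph_rim_adj i j).2 hij))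
  have hcol : (cycleGraph (q - 1)).Colorable 2 :=
    (SimpleGraph.Coloring.mk
      (fun i : Fin (q - 1) => decide (((f (Sum.inr i) : ℕ) % 3 + 3 - h) % 3 = 1)) (by
        intro i j hij e
        have h1 := hrim i j hij
        have h2 := hhub i
        have h3 := hhub j
        rw [decide_eq_decide] at e
        omega)).colorable
  have := hcol.chromaticNumber_le
  rw [SimpleGraph.chromaticNumber_cycleGraph_of_odd _ hq hodd] at this
  exact absurd this (by decide)

lemma card_edgeSet_turanGraph_three (n : ℕ) :
    Nat.card (turanGraph n 3).edgeSet = n ^ 2 / 3 := by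
  rw [Nat.card_eq_fintype_card, ← SimpleGraph.edgeFinset_card, card_edgeFinset_turanGraph]
  obtain ⟨m, hm | hm | hm⟩ : ∃ m, n = 3 * m ∨ n = 3 * m + 1 ∨ n = 3 * m + 2 :=
    ⟨n / 3, by omega⟩
  · subst hm
    have : 3 * m % 3 = 0 := by omega
    rw [this]
    have e : (3 * m) ^ 2 = 9 * m ^ 2 := by ring
    rw [e]
    simp
    omega
  · subst hm
    have : (3 * m + 1) % 3 = 1 := by omega
    rw [this]
    have e : (3 * m + 1) ^ 2 = 9 * m ^ 2 + 6 * m + 1 := by ring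
    rw [e]
    simp
    omega
  · subst hm
    have : (3 * m + 2) % 3 = 2 := by omega
    rw [this]
    have e : (3 * m + 2) ^ 2 = 9 * m ^ 2 + 12 * m + 4 := by ring
    rw [e]
    simp
    omega

lemma vol_univ_eq {V : Type*} [DecidableEq V] [Fintype V] (G : SimpleGraph V) :
    vol G univ = 2 * Nat.card G.edgeSet := by
  classical
  rw [Nat.card_eq_fintype_card, ← SimpleGraph.edgeFinset_card,
    ← G.sum_degrees_eq_twice_card_edges]
  refine sum_congr rfl (fun x _ => ?_)
  rw [← SimpleGraph.card_neighborFinset_eq_degree, dg]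
  congr 1
  ext y
  simp [mem_nb]

lemma card_edgeSet_le {k n : ℕ} (hk : 3 ≤ k) (hn : 6 * k - 10 ≤ n) {G : SimpleGraph (Fin n)}
    (hG : ¬ Contains G (wheelGraph (2 * k))) : Nat.card G.edgeSet ≤ n ^ 2 / 3 := by
  by_contra hlt
  obtain ⟨v, hv⟩ := exists_cyc_nb (G := G) (t := k - 1) (by omega)
    (by rw [Fintype.card_fin]; omega) (by
      rw [vol_univ_eq, Fintype.card_fin]
      omega)
  rw [show 2 * (k - 1) + 1 = 2 * k - 1 by omega] at hv
  exact hG (contains_wheelGraph (fun x hx => (mem_nb.1 hx).2) hv)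

end EvenWheel

/-- Dzido's theorem on even wheels: `ex(n, W_{2k}) = ⌊n²/3⌋`. -/
theorem turanNumber_even_wheel (k n : ℕ) (hk : 3 ≤ k) (hn : 6 * k - 10 ≤ n) :
    exNum n (wheelGraph (2 * k)) = n ^ 2 / 3 := by
  refine IsGreatest.csSup_eq ⟨⟨turanGraph n 3, ?_, EvenWheel.card_edgeSet_turanGraph_three n⟩, ?_⟩
  · exact EvenWheel.turanGraph_not_contains (by omega) ⟨k - 1, by omega⟩
  · rintro e ⟨G, hG, rfl⟩
    exact EvenWheel.card_edgeSet_le hk hn hG
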